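/- Under the hypotheses of the unbounded Kaplansky theorem (B densely defined closed in H, A bounded, A, B, AB all normal, A*AB ⊂ BA*A and AB*B ⊂ B*BA), the following operator identities hold: BA(BA)* = BB*A*A and (BA)*BA = B*BA*A; in particular BB*A*A = B*BA*A. -/

import Mathlib

noncomputable section

variable {H : Type*} [NormedAddCommGroup H] [InnerProductSpace ℂ H] [CompleteSpace H]

namespace LinearPMap

/-- The composition `S ∘ T` of two partially defined linear operators, with its natural
domain `{x ∈ D(T) : T x ∈ D(S)}`. -/
noncomputable def pcomp (S T : H →ₗ.[ℂ] H) : H →ₗ.[ℂ] H :=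
  { domain := (S.domain.comap T.toFun).map T.domain.subtype
    toFun := (S.toFun.comp ((T.toFun.comp (S.domain.comap T.toFun).subtype).codRestrict
        S.domain fun x => x.2)).comp
      (Submodule.equivMapOfInjective T.domain.subtype Subtype.val_injective
        (S.domain.comap T.toFun)).symm.toLinearMap }

/-- A bounded operator viewed as a partially defined operator with domain the
whole space. -/
noncomputable def ofCLM (A : H →L[ℂ] H) : H →ₗ.[ℂ] H :=
  A.toLinearMap.toPMap ⊤

/-- An unbounded densely defined operator is *normal* if it is closed and
`N N* = N* N` (including equality of the natural domains). -/
def IsNormalPMap (N : H →ₗ.[ℂ] H) : Prop :=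
  Dense (N.domain : Set H) ∧ N.IsClosed ∧ N.pcomp N.adjoint = N.adjoint.pcomp N

end LinearPMap

open LinearPMap ContinuousLinearMap

/-- A bounded operator `T` is *normal* if `T T* = T* T`. -/
def IsNormalOp (T : H →L[ℂ] H) : Prop :=
  T * ContinuousLinearMap.adjoint T = ContinuousLinearMap.adjoint T * T

/-!
Everything reduces to one maximality principle: if `S`, `T` are self-adjoint, `C` is bounded and
self-adjoint, and `C S ⊂ T`, then `T = S C`. Taking adjoints gives `T ⊂ S C`; since `T - i` is
onto, equality follows once `S C - i` is injective. If `S C d = i d`, then `C S ⊂ T` yields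
`T (C d) = i C d`, so `C d = 0` and hence `d = 0`.

With `M = B A`, the operators `M M*`, `M* M`, `B B*` and `B* B` are self-adjoint by von Neumann's
theorem, and the two commutation hypotheses give `A A* (B B*) ⊂ M M*` and `A* A (B* B) ⊂ M* M`.
-/

section Adjoint

variable {𝕜 E F : Type*} [RCLike 𝕜] [NormedAddCommGroup E] [InnerProductSpace 𝕜 E]
  [NormedAddCommGroup F] [InnerProductSpace 𝕜 F]

theorem isFormalAdjoint_iff_graph {T : E →ₗ.[𝕜] F} {S : F →ₗ.[𝕜] E} :
    T.IsFormalAdjoint S ↔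
      ∀ x y u v, (x, y) ∈ T.graph → (u, v) ∈ S.graph → inner 𝕜 y u = inner 𝕜 x v := by
  constructor
  · intro h x y u v hxy huv
    obtain ⟨x, rfl, rfl⟩ := T.mem_graph_iff.1 hxy
    obtain ⟨u, rfl, rfl⟩ := S.mem_graph_iff.1 huv
    exact h x u
  · exact fun h x u => h _ _ _ _ (T.mem_graph x) (S.mem_graph u)

variable [CompleteSpace E]

theorem mem_graph_adjoint_iff {T : E →ₗ.[𝕜] F} (hT : Dense (T.domain : Set E)) {x : F} {y : E} :
    (x, y) ∈ T†.graph ↔ ∀ a b, (a, b) ∈ T.graph → inner 𝕜 b x = inner 𝕜 a y := by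
  simp only [adjoint_graph_eq_graph_adjoint hT, Submodule.mem_adjoint_iff, sub_eq_zero]

/-- Uses that `{(-T* y, y)}` is the orthogonal complement of the graph of `T`. -/
theorem exists_graph_add_graph_adjoint [CompleteSpace F] {T : E →ₗ.[𝕜] F}
    (hT : Dense (T.domain : Set E)) (hTc : T.IsClosed) (p : E) (q : F) :
    ∃ x s y t, (x, s) ∈ T.graph ∧ (y, t) ∈ T†.graph ∧ x - t = p ∧ s + y = q := by
  let G : Submodule 𝕜 (WithLp 2 (E × F)) :=
    T.graph.comap (WithLp.linearEquiv 2 𝕜 (E × F)).toLinearMap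
  have hG : IsClosed (G : Set (WithLp 2 (E × F))) :=
    hTc.preimage (WithLp.prod_continuous_ofLp 2 E F)
  have : CompleteSpace G := hG.completeSpace_coe
  obtain ⟨g, hg, h, hh, hgh⟩ := G.exists_add_mem_mem_orthogonal (WithLp.toLp 2 (p, q))
  have h_adjoint : (h.snd, -h.fst) ∈ T†.graph := by
    refine (mem_graph_adjoint_iff hT).2 fun a b hab => ?_
    have h_orth := (G.mem_orthogonal h).1 hh (WithLp.toLp 2 (a, b)) hab
    rw [WithLp.prod_inner_apply] at h_orth
    rw [inner_neg_right]
    exact eq_neg_of_add_eq_zero_right h_orth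
  refine ⟨g.fst, g.snd, h.snd, -h.fst, hg, h_adjoint, ?_, ?_⟩
  · simpa using (congrArg WithLp.fst hgh).symm
  · simpa using (congrArg WithLp.snd hgh).symm

theorem dense_domain_of_isFormalAdjoint_of_surjective {S : E →ₗ.[𝕜] E}
    (hS : S.IsFormalAdjoint S) (hsurj : ∀ u, ∃ x v, (x, v) ∈ S.graph ∧ x + v = u) :
    Dense (S.domain : Set E) := by
  rw [Submodule.dense_iff_topologicalClosure_eq_top,
    Submodule.topologicalClosure_eq_top_iff, Submodule.eq_bot_iff]
  intro u hu
  obtain ⟨x, v, hxv, rfl⟩ := hsurj u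
  obtain ⟨a, b, hab, hx⟩ := hsurj x
  have hxx : inner 𝕜 x x = 0 := by
    rw [← (S.domain.mem_orthogonal _).1 hu a (mem_domain_of_mem_graph hab)]
    nth_rewrite 1 [← hx]
    rw [inner_add_left, inner_add_right, isFormalAdjoint_iff_graph.1 hS _ _ _ _ hab hxv]
  obtain rfl := inner_self_eq_zero.1 hxx
  rw [S.graph_fst_eq_zero_snd hxv rfl, add_zero]

theorem isSelfAdjoint_of_isFormalAdjoint_of_surjective {S : E →ₗ.[𝕜] E}
    (hS : S.IsFormalAdjoint S) (hsurj : ∀ u, ∃ x v, (x, v) ∈ S.graph ∧ x + v = u) :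
    IsSelfAdjoint S := by
  have hdense := dense_domain_of_isFormalAdjoint_of_surjective hS hsurj
  refine le_antisymm (le_of_le_graph ?_) (hS.le_adjoint hdense)
  rintro ⟨w, v⟩ hwv
  obtain ⟨x, y, hxy, hsum⟩ := hsurj (w + v)
  obtain ⟨a, b, hab, hdiff⟩ := hsurj (w - x)
  have hyv : y - v = w - x := sub_eq_sub_iff_add_eq_add.2 ((add_comm _ _).trans hsum)
  have hwx : inner 𝕜 (w - x) (w - x) = 0 := by
    nth_rewrite 1 [← hdiff]
    rw [inner_add_left, inner_sub_right b, (mem_graph_adjoint_iff hdense).1 hwv a b hab,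
      isFormalAdjoint_iff_graph.1 hS _ _ _ _ hab hxy, ← inner_sub_right, ← inner_add_right, ← hyv]
    simp
  have hwx' : w = x := sub_eq_zero.1 (inner_self_eq_zero.1 hwx)
  have hvy : v = y := (sub_eq_zero.1 (hyv.trans (sub_eq_zero.2 hwx'))).symm
  rwa [hwx', hvy]

end Adjoint

section Composition

variable {E : Type*} [NormedAddCommGroup E] [InnerProductSpace ℂ E]

theorem pcomp_apply {S T : E →ₗ.[ℂ] E} (v : T.domain) (hv : T v ∈ S.domain) :
    S.pcomp T ⟨v, v, hv, rfl⟩ = S ⟨T v, hv⟩ :=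
  congrArg (fun w : S.domain.comap T.toFun => S ⟨T w, w.2⟩)
    ((LinearEquiv.symm_apply_eq _).2 rfl :
      (Submodule.equivMapOfInjective T.domain.subtype Subtype.val_injective
        (S.domain.comap T.toFun)).symm ⟨v, v, hv, rfl⟩ = ⟨v, hv⟩)

theorem mem_graph_pcomp_iff {S T : E →ₗ.[ℂ] E} {x z : E} :
    (x, z) ∈ (S.pcomp T).graph ↔ ∃ y, (x, y) ∈ T.graph ∧ (y, z) ∈ S.graph := by
  constructor
  · intro h
    obtain ⟨⟨_, v, hv, rfl⟩, rfl, rfl⟩ := (S.pcomp T).mem_graph_iff.1 h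
    exact ⟨T v, T.mem_graph v, S.mem_graph_iff.2 ⟨⟨T v, hv⟩, rfl, (pcomp_apply v hv).symm⟩⟩
  · rintro ⟨y, hxy, hyz⟩
    obtain ⟨v, rfl, rfl⟩ := T.mem_graph_iff.1 hxy
    have hv : T v ∈ S.domain := mem_domain_of_mem_graph hyz
    obtain rfl := S.mem_graph_snd_inj (S.mem_graph ⟨T v, hv⟩) hyz rfl
    exact (S.pcomp T).mem_graph_iff.2 ⟨⟨v, v, hv, rfl⟩, rfl, pcomp_apply v hv⟩

theorem mem_graph_ofCLM_iff {A : E →L[ℂ] E} {x y : E} : (x, y) ∈ (ofCLM A).graph ↔ A x = y := by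
  rw [LinearPMap.mem_graph_iff]
  exact ⟨by rintro ⟨v, rfl, rfl⟩; rfl, fun h => ⟨⟨x, trivial⟩, rfl, h⟩⟩

theorem mem_graph_pcomp_ofCLM_iff {B : E →ₗ.[ℂ] E} {A : E →L[ℂ] E} {x y : E} :
    (x, y) ∈ (B.pcomp (ofCLM A)).graph ↔ (A x, y) ∈ B.graph := by
  simp only [mem_graph_pcomp_iff, mem_graph_ofCLM_iff, exists_eq_left']

theorem ofCLM_pcomp_le_iff {S T : E →ₗ.[ℂ] E} {A : E →L[ℂ] E} :
    (ofCLM A).pcomp S ≤ T ↔ ∀ x y, (x, y) ∈ S.graph → (x, A y) ∈ T.graph := by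
  rw [← le_graph_iff]
  constructor
  · exact fun h x y hxy =>
      h (mem_graph_pcomp_iff.2 ⟨y, hxy, mem_graph_ofCLM_iff.2 rfl⟩)
  · rintro h ⟨x, z⟩ hxz
    obtain ⟨y, hxy, hyz⟩ := mem_graph_pcomp_iff.1 hxz
    exact mem_graph_ofCLM_iff.1 hyz ▸ h x y hxy

theorem isFormalAdjoint_pcomp_self {S T : E →ₗ.[ℂ] E} (h : S.IsFormalAdjoint T) :
    (S.pcomp T).IsFormalAdjoint (S.pcomp T) := by
  have hST := isFormalAdjoint_iff_graph.1 h
  have hTS := isFormalAdjoint_iff_graph.1 h.symm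
  refine isFormalAdjoint_iff_graph.2 fun x y u v hxy huv => ?_
  obtain ⟨s, hxs, hsy⟩ := mem_graph_pcomp_iff.1 hxy
  obtain ⟨t, hut, htv⟩ := mem_graph_pcomp_iff.1 huv
  exact (hST _ _ _ _ hsy hut).trans (hTS _ _ _ _ hxs htv)

theorem isClosed_pcomp_ofCLM {B : E →ₗ.[ℂ] E} (hB : B.IsClosed) (A : E →L[ℂ] E) :
    (B.pcomp (ofCLM A)).IsClosed := by
  have hgraph : ((B.pcomp (ofCLM A)).graph : Set (E × E)) =
      (fun p : E × E => (A p.1, p.2)) ⁻¹' B.graph :=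
    Set.ext fun _ => mem_graph_pcomp_ofCLM_iff
  rw [LinearPMap.IsClosed, hgraph]
  exact IsClosed.preimage (by fun_prop) hB

end Composition

section VonNeumann

variable {T : H →ₗ.[ℂ] H}

theorem isSelfAdjoint_adjoint_pcomp_self (hT : Dense (T.domain : Set H))
    (hTc : T.IsClosed) : IsSelfAdjoint (T†.pcomp T) := by
  refine isSelfAdjoint_of_isFormalAdjoint_of_surjective
    (isFormalAdjoint_pcomp_self (adjoint_isFormalAdjoint hT)) fun u => ?_
  obtain ⟨x, s, y, t, hxs, hyt, hu, hsy⟩ := exists_graph_add_graph_adjoint hT hTc u 0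
  obtain rfl : s = -y := eq_neg_of_add_eq_zero_left hsy
  exact ⟨x, -t, mem_graph_pcomp_iff.2 ⟨-y, hxs, T†.graph.neg_mem hyt⟩,
    (sub_eq_add_neg x t).symm.trans hu⟩

theorem isSelfAdjoint_pcomp_adjoint_self (hT : Dense (T.domain : Set H))
    (hTc : T.IsClosed) : IsSelfAdjoint (T.pcomp T†) := by
  refine isSelfAdjoint_of_isFormalAdjoint_of_surjective
    (isFormalAdjoint_pcomp_self (adjoint_isFormalAdjoint hT).symm) fun u => ?_
  obtain ⟨x, s, y, t, hxs, hyt, hxt, hu⟩ := exists_graph_add_graph_adjoint hT hTc 0 u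
  obtain rfl : x = t := sub_eq_zero.1 hxt
  exact ⟨y, s, mem_graph_pcomp_iff.2 ⟨x, hyt, hxs⟩, (add_comm y s).trans hu⟩

end VonNeumann

section Maximality

open Complex

theorem exists_mem_graph_sub_I_smul_eq {T : H →ₗ.[ℂ] H} (hT : IsSelfAdjoint T) (u : H) :
    ∃ x y, (x, y) ∈ T.graph ∧ y - I • x = u := by
  obtain ⟨x, s, y, t, hxs, hyt, hxt, rfl⟩ :=
    exists_graph_add_graph_adjoint hT.dense_domain hT.isClosed 0 u
  rw [isSelfAdjoint_def.1 hT] at hyt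
  obtain rfl : x = t := sub_eq_zero.1 hxt
  refine ⟨x + I • y, s + I • x, T.graph.add_mem hxs (T.graph.smul_mem I hyt), ?_⟩
  rw [smul_add, smul_smul, I_mul_I]
  module

theorem eq_of_le_of_sub_I_injective {T R : H →ₗ.[ℂ] H} (hT : IsSelfAdjoint T) (hTR : T ≤ R)
    (hR : ∀ x, (x, I • x) ∈ R.graph → x = 0) : T = R := by
  refine le_antisymm hTR (le_of_le_graph ?_)
  rintro ⟨x, y⟩ hxy
  obtain ⟨z, w, hzw, hsub⟩ := exists_mem_graph_sub_I_smul_eq hT (y - I • x)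
  have hyw : y - w = I • (x - z) := by
    rw [smul_sub, ← sub_eq_zero, ← sub_eq_zero.2 hsub.symm]
    abel
  have hdiff : (x - z, y - w) ∈ R.graph := R.graph.sub_mem hxy (le_graph_of_le hTR hzw)
  have hxz : x - z = 0 := hR _ (hyw ▸ hdiff)
  rw [hxz, smul_zero] at hyw
  rwa [sub_eq_zero.1 hxz, sub_eq_zero.1 hyw]

theorem eq_zero_of_mem_graph_I_smul {E : Type*} [NormedAddCommGroup E] [InnerProductSpace ℂ E]
    {T : E →ₗ.[ℂ] E} (hT : T.IsFormalAdjoint T) {x : E} (hx : (x, I • x) ∈ T.graph) : x = 0 := by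
  have h := isFormalAdjoint_iff_graph.1 hT _ _ _ _ hx hx
  rw [inner_smul_left, inner_smul_right, conj_I, neg_mul, neg_eq_self, mul_eq_zero] at h
  exact inner_self_eq_zero.1 (h.resolve_left I_ne_zero)

theorem le_adjoint_pcomp_ofCLM_adjoint {R S T : H →ₗ.[ℂ] H} {C : H →L[ℂ] H}
    (hS : Dense (S.domain : Set H)) (hTR : T.IsFormalAdjoint R) (h : (ofCLM C).pcomp S ≤ T) :
    R ≤ S†.pcomp (ofCLM C.adjoint) := by
  refine le_of_le_graph ?_
  rintro ⟨x, y⟩ hxy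
  refine mem_graph_pcomp_ofCLM_iff.2 ((mem_graph_adjoint_iff hS).2 fun a b hab => ?_)
  rw [ContinuousLinearMap.adjoint_inner_right]
  exact isFormalAdjoint_iff_graph.1 hTR _ _ _ _ (ofCLM_pcomp_le_iff.1 h a b hab) hxy

theorem eq_pcomp_ofCLM_of_ofCLM_pcomp_le {S T : H →ₗ.[ℂ] H} {C : H →L[ℂ] H}
    (hS : IsSelfAdjoint S) (hT : IsSelfAdjoint T) (hC : IsSelfAdjoint C)
    (h : (ofCLM C).pcomp S ≤ T) : T = S.pcomp (ofCLM C) := by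
  have hTsymm : T.IsFormalAdjoint T := by
    simpa only [isSelfAdjoint_def.1 hT] using adjoint_isFormalAdjoint hT.dense_domain
  have hle : T ≤ S.pcomp (ofCLM C) := by
    simpa only [isSelfAdjoint_def.1 hS, hC.adjoint_eq] using
      le_adjoint_pcomp_ofCLM_adjoint hS.dense_domain hTsymm h
  refine eq_of_le_of_sub_I_injective hT hle fun d hd => ?_
  rw [mem_graph_pcomp_ofCLM_iff] at hd
  have hCd : C d = 0 := by
    have hTCd := ofCLM_pcomp_le_iff.1 h _ _ hd
    rw [ContinuousLinearMap.map_smul] at hTCd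
    exact eq_zero_of_mem_graph_I_smul hTsymm hTCd
  exact (smul_eq_zero_iff_right I_ne_zero).1 (S.graph_fst_eq_zero_snd hd hCd)

end Maximality

section Kaplansky

variable {B : H →ₗ.[ℂ] H} {A : H →L[ℂ] H}

theorem ofCLM_adjoint_pcomp_adjoint_le (hB : Dense (B.domain : Set H))
    (hBA : Dense ((B.pcomp (ofCLM A)).domain : Set H)) :
    (ofCLM A.adjoint).pcomp B† ≤ (B.pcomp (ofCLM A))† := by
  refine ofCLM_pcomp_le_iff.2 fun x y hxy => (mem_graph_adjoint_iff hBA).2 fun a b hab => ?_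
  rw [ContinuousLinearMap.adjoint_inner_right]
  exact (mem_graph_adjoint_iff hB).1 hxy _ _ (mem_graph_pcomp_ofCLM_iff.1 hab)

theorem dense_domain_pcomp_ofCLM (hB : Dense (B.domain : Set H))
    (h : ∀ x ∈ B.domain, A (A.adjoint x) ∈ B.domain) :
    Dense ((B.pcomp (ofCLM A)).domain : Set H) := by
  have mem_domain : ∀ x, A x ∈ B.domain → x ∈ (B.pcomp (ofCLM A)).domain := fun x hx =>
    mem_domain_of_mem_graph (mem_graph_pcomp_ofCLM_iff.2 (B.mem_graph ⟨A x, hx⟩))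
  rw [Submodule.dense_iff_topologicalClosure_eq_top,
    Submodule.topologicalClosure_eq_top_iff, Submodule.eq_bot_iff]
  intro u hu
  rw [Submodule.mem_orthogonal] at hu
  have hAu : A u = 0 := hB.eq_zero_of_inner_right ℂ fun x hx => by
    rw [← ContinuousLinearMap.adjoint_inner_left]
    exact hu _ (mem_domain _ (h x hx))
  exact inner_self_eq_zero.1 (hu u (mem_domain u (hAu ▸ B.domain.zero_mem)))

theorem pcomp_ofCLM_pcomp_adjoint_eq (hB : Dense (B.domain : Set H)) (hBc : B.IsClosed)
    (h : (ofCLM (A * A.adjoint)).pcomp B ≤ B.pcomp (ofCLM (A * A.adjoint))) :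
    (B.pcomp (ofCLM A)).pcomp (B.pcomp (ofCLM A))† =
      (B.pcomp B†).pcomp (ofCLM (A * A.adjoint)) := by
  have hcomm : ∀ x y, (x, y) ∈ B.graph → (A (A.adjoint x), A (A.adjoint y)) ∈ B.graph :=
    fun x y hxy =>
      mem_graph_pcomp_ofCLM_iff (A := A * A.adjoint).1 (ofCLM_pcomp_le_iff.1 h x y hxy)
  have hBA : Dense ((B.pcomp (ofCLM A)).domain : Set H) :=
    dense_domain_pcomp_ofCLM hB fun x hx =>
      mem_domain_of_mem_graph (hcomm _ _ (B.mem_graph ⟨x, hx⟩))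
  refine eq_pcomp_ofCLM_of_ofCLM_pcomp_le (isSelfAdjoint_pcomp_adjoint_self hB hBc)
    (isSelfAdjoint_pcomp_adjoint_self hBA (isClosed_pcomp_ofCLM hBc A)) (.mul_star_self A)
    (ofCLM_pcomp_le_iff.2 fun x y hxy => ?_)
  obtain ⟨s, hxs, hsy⟩ := mem_graph_pcomp_iff.1 hxy
  exact mem_graph_pcomp_iff.2 ⟨A.adjoint s,
    ofCLM_pcomp_le_iff.1 (ofCLM_adjoint_pcomp_adjoint_le hB hBA) x s hxs,
    mem_graph_pcomp_ofCLM_iff.2 (hcomm s y hsy)⟩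

theorem adjoint_pcomp_pcomp_ofCLM_eq (hB : Dense (B.domain : Set H)) (hBc : B.IsClosed)
    (h : (ofCLM A).pcomp (B†.pcomp B) ≤ (B†.pcomp B).pcomp (ofCLM A)) :
    (B.pcomp (ofCLM A))†.pcomp (B.pcomp (ofCLM A)) =
      (B†.pcomp B).pcomp (ofCLM (A.adjoint * A)) := by
  have hcomm : ∀ x y, (x, y) ∈ (B†.pcomp B).graph →
      ∃ s, (x, s) ∈ (B.pcomp (ofCLM A)).graph ∧ (s, A y) ∈ B†.graph := by
    intro x y hxy
    have hAxy := mem_graph_pcomp_ofCLM_iff.1 (ofCLM_pcomp_le_iff.1 h x y hxy)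
    simpa only [mem_graph_pcomp_ofCLM_iff] using mem_graph_pcomp_iff.1 hAxy
  have hBA : Dense ((B.pcomp (ofCLM A)).domain : Set H) := by
    refine (isSelfAdjoint_adjoint_pcomp_self hB hBc).dense_domain.mono fun x hx => ?_
    obtain ⟨s, hxs, -⟩ := hcomm _ _ ((B†.pcomp B).mem_graph ⟨x, hx⟩)
    exact mem_domain_of_mem_graph hxs
  refine eq_pcomp_ofCLM_of_ofCLM_pcomp_le (isSelfAdjoint_adjoint_pcomp_self hB hBc)
    (isSelfAdjoint_adjoint_pcomp_self hBA (isClosed_pcomp_ofCLM hBc A)) (.star_mul_self A)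
    (ofCLM_pcomp_le_iff.2 fun x y hxy => ?_)
  obtain ⟨s, hxs, hsy⟩ := hcomm x y hxy
  exact mem_graph_pcomp_iff.2 ⟨s, hxs,
    ofCLM_pcomp_le_iff.1 (ofCLM_adjoint_pcomp_adjoint_le hB hBA) s (A y) hsy⟩

theorem kaplansky_unbounded_identities_general (hA : IsNormalOp A) (hB : IsNormalPMap B)
    (h1 : (ofCLM (A.adjoint * A)).pcomp B ≤ B.pcomp (ofCLM (A.adjoint * A)))
    (h2 : (ofCLM A).pcomp (B†.pcomp B) ≤ (B†.pcomp B).pcomp (ofCLM A)) :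
    (B.pcomp (ofCLM A)).pcomp (B.pcomp (ofCLM A))† =
      (B.pcomp B†).pcomp (ofCLM (A.adjoint * A)) ∧
    (B.pcomp (ofCLM A))†.pcomp (B.pcomp (ofCLM A)) =
      (B†.pcomp B).pcomp (ofCLM (A.adjoint * A)) ∧
    (B.pcomp B†).pcomp (ofCLM (A.adjoint * A)) =
      (B†.pcomp B).pcomp (ofCLM (A.adjoint * A)) := by
  obtain ⟨hBdense, hBclosed, hBcomm⟩ := hB
  refine ⟨?_, adjoint_pcomp_pcomp_ofCLM_eq hBdense hBclosed h2, by rw [hBcomm]⟩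
  rw [← hA] at h1 ⊢
  exact pcomp_ofCLM_pcomp_adjoint_eq hBdense hBclosed h1

end Kaplansky

/-- Under the hypotheses of the unbounded Kaplansky theorem (`B` densely defined and
closed, `A` bounded, `A`, `B`, `AB` all normal, `A* A B ⊂ B A* A` and
`A B* B ⊂ B* B A`) one has the operator identities
`BA (BA)* = B B* A* A` and `(BA)* BA = B* B A* A`; in particular
`B B* A* A = B* B A* A`. -/
theorem kaplansky_unbounded_identities [TopologicalSpace.SeparableSpace H] (B : H →ₗ.[ℂ] H) (A : H →L[ℂ] H)
    (hBdense : Dense (B.domain : Set H)) (hBclosed : B.IsClosed)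
    (hA : IsNormalOp A) (hB : IsNormalPMap B) (hAB : IsNormalPMap ((ofCLM A).pcomp B))
    (h1 : (ofCLM (ContinuousLinearMap.adjoint A * A)).pcomp B ≤
      B.pcomp (ofCLM (ContinuousLinearMap.adjoint A * A)))
    (h2 : (ofCLM A).pcomp (B.adjoint.pcomp B) ≤ (B.adjoint.pcomp B).pcomp (ofCLM A)) :
    (B.pcomp (ofCLM A)).pcomp (B.pcomp (ofCLM A)).adjoint =
      (B.pcomp B.adjoint).pcomp (ofCLM (ContinuousLinearMap.adjoint A * A)) ∧
    (B.pcomp (ofCLM A)).adjoint.pcomp (B.pcomp (ofCLM A)) =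
      (B.adjoint.pcomp B).pcomp (ofCLM (ContinuousLinearMap.adjoint A * A)) ∧
    (B.pcomp B.adjoint).pcomp (ofCLM (ContinuousLinearMap.adjoint A * A)) =
      (B.adjoint.pcomp B).pcomp (ofCLM (ContinuousLinearMap.adjoint A * A)) :=
  kaplansky_unbounded_identities_general hA hB h1 h2
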